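/- Let K be a field of characteristic zero, A_n(K) the Weyl algebra with a fixed partition of {1,…,n} into blocks of sizes n_1,…,n_p, E a free A_n(K)-module with free generators e_1,…,e_m, and G = {g_1,…,g_r} a finite set of nonzero elements of E. Then for every f ∈ E there exist g ∈ E and Q_1,…,Q_r ∈ A_n(K) such that f − g = Σ_{i=1}^{r} Q_i g_i and g is (<_1,…,<_p)-reduced with respect to G. -/

import Mathlib

set_option synthInstance.maxHeartbeats 400000
set_option maxHeartbeats 1000000

open MvPolynomial

noncomputable def weylGens (n : ℕ) (K : Type) [Field K] :
    Set (Module.End K (MvPolynomial (Fin n) K)) :=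
  (Set.range fun i : Fin n =>
      (LinearMap.mulLeft K (X i : MvPolynomial (Fin n) K) : Module.End K (MvPolynomial (Fin n) K))) ∪
  (Set.range fun i : Fin n => ((pderiv i).toLinearMap : Module.End K (MvPolynomial (Fin n) K)))

noncomputable def WeylAlg (n : ℕ) (K : Type) [Field K] :
    Subalgebra K (Module.End K (MvPolynomial (Fin n) K)) :=
  Algebra.adjoin K (weylGens n K)

noncomputable def wx (n : ℕ) (K : Type) [Field K] (i : Fin n) : WeylAlg n K :=
  ⟨LinearMap.mulLeft K (X i), Algebra.subset_adjoin (Set.mem_union_left _ ⟨i, rfl⟩)⟩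

noncomputable def wd (n : ℕ) (K : Type) [Field K] (i : Fin n) : WeylAlg n K :=
  ⟨(pderiv i).toLinearMap, Algebra.subset_adjoin (Set.mem_union_right _ ⟨i, rfl⟩)⟩

noncomputable def wMono (n : ℕ) (K : Type) [Field K] (α β : Fin n → ℕ) : WeylAlg n K :=
  (((List.finRange n).map fun i => wx n K i ^ α i).prod) *
  (((List.finRange n).map fun i => wd n K i ^ β i).prod)

def ordTot (n : ℕ) (α β : Fin n → ℕ) : ℕ := (∑ i, α i) + ∑ i, β i

noncomputable def bernW (n : ℕ) (K : Type) [Field K] (r : ℤ) : Submodule K (WeylAlg n K) :=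
  Submodule.span K {D | ∃ α β : Fin n → ℕ, (ordTot n α β : ℤ) ≤ r ∧ D = wMono n K α β}

noncomputable def modFil (n : ℕ) (K : Type) [Field K] (M : Type) [AddCommGroup M]
    [Module K M] [Module (WeylAlg n K) M] (m : ℕ) (g : Fin m → M) (r : ℤ) :
    Submodule K M :=
  Submodule.span K {x | ∃ i, ∃ D ∈ bernW n K r, x = D • g i}


/-- The `j`-th order of the monomial `x^α ∂^β` with respect to the partition `B`. -/
def ordBlk {n p : ℕ} (B : Fin n → Fin p) (α β : Fin n → ℕ) (j : Fin p) : ℕ :=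
  ∑ i ∈ Finset.univ.filter (fun i => B i = j), (α i + β i)

/-- An exponent pair `(α, β)` encoding the monomial `x^α ∂^β`. -/
abbrev WExp (n : ℕ) := (Fin n → ℕ) × (Fin n → ℕ)

/-- A term `θ e_i` of the free module `E`: a monomial together with the index of a
free generator. -/
abbrev WTerm (n m : ℕ) := WExp n × Fin m

/-- The `j`-th order of a term. -/
def ordT {n p m : ℕ} (B : Fin n → Fin p) (j : Fin p) (t : WTerm n m) : ℕ :=
  ordBlk B t.1.1 t.1.2 j

/-- The comparison vector of a monomial used to define the order `<_j`:
the `j`-th order, then the other orders, then the exponents of the `j`-th block,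
then the remaining exponents. -/
def keyList {n p : ℕ} (B : Fin n → Fin p) (j : Fin p) (t : WExp n) : List ℕ :=
  [ordBlk B t.1 t.2 j] ++
  (((List.finRange p).filter fun k => k ≠ j).map (ordBlk B t.1 t.2)) ++
  (((List.finRange n).filter fun i => B i = j).map t.1) ++
  (((List.finRange n).filter fun i => B i = j).map t.2) ++
  ((((List.finRange n).filter fun i => B i ≠ j).map fun i => [t.1 i, t.2 i]).flatten)

/-- The order `<_j` on monomials. -/
def monLt {n p : ℕ} (B : Fin n → Fin p) (j : Fin p) (s t : WExp n) : Prop :=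
  List.Lex (· < ·) (keyList B j s) (keyList B j t)

/-- The order `<_j` on terms of the free module. -/
def termLt {n p m : ℕ} (B : Fin n → Fin p) (j : Fin p) (s t : WTerm n m) : Prop :=
  monLt B j s.1 t.1 ∨ (s.1 = t.1 ∧ s.2 < t.2)

/-- Divisibility of terms: same free generator and componentwise smaller exponents. -/
def tdvd {n m : ℕ} (s t : WTerm n m) : Prop :=
  s.2 = t.2 ∧ s.1.1 ≤ t.1.1 ∧ s.1.2 ≤ t.1.2

/-- The quotient monomial `t/s` of two terms with `s ∣ t`. -/
def tquot {n m : ℕ} (t s : WTerm n m) : WExp n :=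
  (t.1.1 - s.1.1, t.1.2 - s.1.2)

/-- The element `θ e_i` of the free module `E = A_n(K)^m`. -/
noncomputable def termVal {n m : ℕ} (K : Type) [Field K] (t : WTerm n m) :
    Fin m → WeylAlg n K :=
  Pi.single t.2 (wMono n K t.1.1 t.1.2)

/-- `c` is the coefficient expansion of `f ∈ E` in the basis of terms. -/
def Represents {n m : ℕ} {K : Type} [Field K] (c : WTerm n m →₀ K)
    (f : Fin m → WeylAlg n K) : Prop :=
  f = c.sum fun t a => a • termVal K t

/-- `u` is the `j`-th leader of the element represented by `c`: the greatest term
appearing in it with respect to `<_j`. -/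
def IsLeader {n p m : ℕ} {K : Type} [Field K] (B : Fin n → Fin p) (j : Fin p)
    (c : WTerm n m →₀ K) (u : WTerm n m) : Prop :=
  u ∈ c.support ∧ ∀ t ∈ c.support, t ≠ u → termLt B j t u

/-- `ρ(g) ∣ ρ(f)`, where `u g`, `u f` are the leaders of `g` and `f`:
the first leaders divide and `d_j(g) ≤ d_j(f)` for all `j`. -/
def rhoDvd {n p m : ℕ} (B : Fin n → Fin p) (hp : 0 < p)
    (ug uf : Fin p → WTerm n m) : Prop :=
  tdvd (ug ⟨0, hp⟩) (uf ⟨0, hp⟩) ∧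
  ∀ j, (ordT B j (ug j) : ℤ) - (ordT B j (ug ⟨0, hp⟩) : ℤ) ≤
       (ordT B j (uf j) : ℤ) - (ordT B j (uf ⟨0, hp⟩) : ℤ)

/-- One-step `(<_k, <_{i₁}, …, <_{i_l})`-reduction of `f` to `h` modulo `g`, where `cg`
is the expansion of `g` and `ug j` its `j`-th leader. -/
def RedStep {n p m : ℕ} {K : Type} [Field K] (B : Fin n → Fin p)
    (k : Fin p) (is : List (Fin p))
    (g : Fin m → WeylAlg n K) (cg : WTerm n m →₀ K) (ug : Fin p → WTerm n m)
    (f h : Fin m → WeylAlg n K) : Prop :=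
  ∃ cf : WTerm n m →₀ K, Represents cf f ∧
    ∃ w ∈ cf.support, tdvd (ug k) w ∧
      (∀ i ∈ is, ∀ uf : WTerm n m, IsLeader B i cf uf →
        ordBlk B (tquot w (ug k)).1 (tquot w (ug k)).2 i + ordT B i (ug i) ≤
          ordT B i uf) ∧
      h = f - (cf w * (cg (ug k))⁻¹) •
        fun j => wMono n K (tquot w (ug k)).1 (tquot w (ug k)).2 * g j

/-- The element represented by `cf` is `(<_k, <_{i₁}, …, <_{i_l})`-reduced with respect to an
element with leaders `ug`. -/
def ReducedWrt {n p m : ℕ} {K : Type} [Field K] (B : Fin n → Fin p)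
    (k : Fin p) (is : List (Fin p))
    (cf : WTerm n m →₀ K) (ug : Fin p → WTerm n m) : Prop :=
  ∀ w ∈ cf.support, tdvd (ug k) w →
    ∃ i ∈ is, ∃ uf : WTerm n m, IsLeader B i cf uf ∧
      ordT B i uf <
        ordBlk B (tquot w (ug k)).1 (tquot w (ug k)).2 i + ordT B i (ug i)

section generic
variable {A : Type*} [Ring A] {n : ℕ}

def LP (y : Fin n → A) (l : List (Fin n)) (a : Fin n → ℕ) : A := (l.map fun i => y i ^ a i).prod

theorem LP_notmem (y : Fin n → A) (i : Fin n) (l : List (Fin n)) (a b : Fin n → ℕ)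
    (hab : ∀ j, j ≠ i → a j = b j) (h : i ∉ l) : LP y l a = LP y l b := by
  unfold LP
  congr 1
  apply List.map_congr_left
  intro j hj
  rw [hab j]
  rintro rfl
  exact h hj

theorem LP_mul (y : Fin n → A) (hy : ∀ i j, Commute (y i) (y j)) (i : Fin n)
    (l : List (Fin n)) (a : Fin n → ℕ) (hl : l.Nodup) (hi : i ∈ l) :
    y i * LP y l a = LP y l (a + Pi.single i 1) := by
  induction l with
  | nil => simp at hi
  | cons k l ih =>
    have hn := List.nodup_cons.mp hl
    change y i * (y k ^ a k * LP y l a) = y k ^ ((a + Pi.single i 1 : Fin n → ℕ) k) * LP y l (a + Pi.single i 1)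
    by_cases h : i = k
    · subst h
      rw [← mul_assoc, ← pow_succ',
        LP_notmem y i l a (a + Pi.single i 1) (by intro j hj; simp [hj]) hn.1]
      simp
    · have hi' : i ∈ l := by
        rcases List.mem_cons.mp hi with h' | h'
        · exact absurd h' h
        · exact h'
      rw [← mul_assoc, ((hy i k).pow_right (a k)).eq, mul_assoc, ih hn.2 hi']
      have : k ≠ i := fun e => h e.symm
      simp [this]

theorem LP_comm (y : Fin n → A) (d : A) (l : List (Fin n)) (a : Fin n → ℕ)
    (h : ∀ i ∈ l, Commute d (y i)) : d * LP y l a = LP y l a * d := by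
  have : Commute d (LP y l a) := by
    unfold LP
    apply Commute.list_prod_right
    intro x hx
    obtain ⟨i, hi, rfl⟩ := List.mem_map.mp hx
    exact (h i hi).pow_right _
  exact this.eq

theorem d_pow (d x : A) (h : d * x = x * d + 1) (k : ℕ) :
    d * x ^ k = x ^ k * d + (k : A) * x ^ (k - 1) := by
  induction k with
  | zero => simp
  | succ k ih =>
    rw [pow_succ, ← mul_assoc, ih, add_mul, mul_assoc, h, mul_assoc]
    rcases k with _ | k
    · simp
    · simp only [Nat.add_sub_cancel, ← pow_succ]
      rw [Nat.cast_succ (k + 1), mul_add, ← mul_assoc, mul_one, add_mul _ (1 : A), one_mul,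
        ← pow_succ]
      abel

theorem LP_d (x : Fin n → A) (d : A) (i : Fin n) (hi0 : d * x i = x i * d + 1)
    (hc : ∀ j, j ≠ i → Commute d (x j))
    (l : List (Fin n)) (a : Fin n → ℕ) (hl : l.Nodup) (hi : i ∈ l) :
    d * LP x l a = LP x l a * d + (a i : A) * LP x l (a - Pi.single i 1) := by
  induction l with
  | nil => simp at hi
  | cons k l ih =>
    have hn := List.nodup_cons.mp hl
    change d * (x k ^ a k * LP x l a) = (x k ^ a k * LP x l a) * d +
      (a i : A) * (x k ^ ((a - Pi.single i 1 : Fin n → ℕ) k) * LP x l (a - Pi.single i 1))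
    by_cases h : i = k
    · subst h
      rw [← LP_notmem x i l a (a - Pi.single i 1) (by intro j hj; simp [hj]) hn.1]
      rw [← mul_assoc, d_pow d _ hi0, add_mul, mul_assoc, LP_comm x d l a, mul_assoc, mul_assoc]
      · simp
      · intro j hj
        apply hc
        rintro rfl
        exact hn.1 hj
    · have hi' : i ∈ l := by
        rcases List.mem_cons.mp hi with h' | h'
        · exact absurd h' h
        · exact h'
      have hk : k ≠ i := fun e => h e.symm
      rw [← mul_assoc, ((hc k hk).pow_right (a k)).eq, mul_assoc, ih hn.2 hi', mul_add, mul_assoc]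
      congr 1
      rw [← mul_assoc, ← mul_assoc, ← (Nat.cast_commute (a i) (x k ^ a k)).eq]
      simp [hk]
end generic

section main

theorem wMono_eq (n : ℕ) (K : Type) [Field K] (a b : Fin n → ℕ) :
    wMono n K a b = LP (wx n K) (List.finRange n) a * LP (wd n K) (List.finRange n) b := rfl

theorem wx_comm (n : ℕ) (K : Type) [Field K] (i j : Fin n) : Commute (wx n K i) (wx n K j) := by
  apply Subtype.ext
  apply LinearMap.ext
  intro f
  change (X i : MvPolynomial (Fin n) K) * (X j * f) = X j * (X i * f)
  ring

theorem wd_comm (n : ℕ) (K : Type) [Field K] (i j : Fin n) : Commute (wd n K i) (wd n K j) := by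
  apply Subtype.ext
  apply LinearMap.ext
  intro f
  change pderiv i (pderiv j f) = pderiv j (pderiv i f)
  have h : ⁅(pderiv i : Derivation K (MvPolynomial (Fin n) K) (MvPolynomial (Fin n) K)),
      (pderiv j : Derivation K (MvPolynomial (Fin n) K) (MvPolynomial (Fin n) K))⁆ = 0 := by
    apply MvPolynomial.derivation_ext
    intro k
    rw [Derivation.commutator_apply]
    simp only [pderiv_X, Derivation.coe_zero, Pi.zero_apply]
    by_cases h1 : i = k <;> by_cases h2 : j = k <;> simp [h1, h2]
  have h2 := congrArg (fun D => D f) h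
  simpa [Derivation.commutator_apply, sub_eq_zero] using h2

theorem wd_wx_same (n : ℕ) (K : Type) [Field K] (i : Fin n) :
    wd n K i * wx n K i = wx n K i * wd n K i + 1 := by
  apply Subtype.ext
  apply LinearMap.ext
  intro f
  change pderiv i ((X i : MvPolynomial (Fin n) K) * f) = X i * pderiv i f + f
  rw [Derivation.leibniz]
  simp

theorem wd_wx_ne (n : ℕ) (K : Type) [Field K] (i j : Fin n) (h : j ≠ i) :
    Commute (wd n K i) (wx n K j) := by
  apply Subtype.ext
  apply LinearMap.ext
  intro f
  change pderiv i ((X j : MvPolynomial (Fin n) K) * f) = X j * pderiv i f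
  rw [Derivation.leibniz]
  simp [pderiv_X_of_ne h]

theorem wx_wMono (n : ℕ) (K : Type) [Field K] (i : Fin n) (a b : Fin n → ℕ) :
    wx n K i * wMono n K a b = wMono n K (a + Pi.single i 1) b := by
  rw [wMono_eq, wMono_eq, ← mul_assoc, LP_mul _ (wx_comm n K) i _ _ (List.nodup_finRange n)
    (List.mem_finRange i)]

theorem wd_wMono (n : ℕ) (K : Type) [Field K] (i : Fin n) (a b : Fin n → ℕ) :
    wd n K i * wMono n K a b = wMono n K a (b + Pi.single i 1) +
      (a i : K) • wMono n K (a - Pi.single i 1) b := by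
  rw [wMono_eq, wMono_eq, wMono_eq, ← mul_assoc, LP_d (wx n K) (wd n K i) i (wd_wx_same n K i)
    (fun j h => wd_wx_ne n K i j h) _ _ (List.nodup_finRange n) (List.mem_finRange i), add_mul,
    mul_assoc, LP_mul _ (wd_comm n K) i _ _ (List.nodup_finRange n) (List.mem_finRange i),
    mul_assoc, Algebra.smul_def, map_natCast]

/-- Span of the monomials strictly below the per-variable bound `e`. -/
noncomputable def Low (n : ℕ) (K : Type) [Field K] (e : Fin n → ℕ) : Submodule K (WeylAlg n K) :=
  Submodule.span K ((fun t : WExp n => wMono n K t.1 t.2) ''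
    {t | (∀ i, t.1 i + t.2 i ≤ e i) ∧ ∃ i, t.1 i + t.2 i < e i})

theorem low_mem {n : ℕ} {K : Type} [Field K] {e : Fin n → ℕ} (a b : Fin n → ℕ)
    (h : ∀ i, a i + b i ≤ e i) (h' : ∃ i, a i + b i < e i) : wMono n K a b ∈ Low n K e :=
  Submodule.subset_span ⟨(a, b), ⟨h, h'⟩, rfl⟩

theorem single_le_aux {n : ℕ} (i k : Fin n) (x y : ℕ) (h : x ≤ y) :
    x + (Pi.single i 1 : Fin n → ℕ) k ≤ y + (Pi.single i 1 : Fin n → ℕ) k := by omega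

theorem wx_low {n : ℕ} {K : Type} [Field K] (i : Fin n) (e : Fin n → ℕ) (D : WeylAlg n K)
    (h : D ∈ Low n K e) : wx n K i * D ∈ Low n K (e + Pi.single i 1) := by
  have : Low n K e ≤ (Low n K (e + Pi.single i 1)).comap (LinearMap.mulLeft K (wx n K i)) := by
    refine Submodule.span_le.mpr ?_
    rintro _ ⟨t, ⟨h1, k, h2⟩, rfl⟩
    change wx n K i * wMono n K t.1 t.2 ∈ Low n K (e + Pi.single i 1)
    rw [wx_wMono]
    apply low_mem
    · intro j
      have := h1 j
      simp only [Pi.add_apply]; omega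
    · refine ⟨k, ?_⟩
      simp only [Pi.add_apply]; omega
  exact this h

theorem wd_low {n : ℕ} {K : Type} [Field K] (i : Fin n) (e : Fin n → ℕ) (D : WeylAlg n K)
    (h : D ∈ Low n K e) : wd n K i * D ∈ Low n K (e + Pi.single i 1) := by
  have : Low n K e ≤ (Low n K (e + Pi.single i 1)).comap (LinearMap.mulLeft K (wd n K i)) := by
    refine Submodule.span_le.mpr ?_
    rintro _ ⟨t, ⟨h1, k, h2⟩, rfl⟩
    change wd n K i * wMono n K t.1 t.2 ∈ Low n K (e + Pi.single i 1)
    rw [wd_wMono]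
    apply Submodule.add_mem
    · apply low_mem
      · intro j
        have := h1 j
        simp only [Pi.add_apply]; omega
      · refine ⟨k, ?_⟩
        simp only [Pi.add_apply]; omega
    · apply Submodule.smul_mem
      apply low_mem
      · intro j
        have := h1 j
        simp only [Pi.add_apply, Pi.sub_apply]; omega
      · refine ⟨k, ?_⟩
        simp only [Pi.add_apply, Pi.sub_apply]; omega
  exact this h

def GoodW {n : ℕ} {K : Type} [Field K] (D : WeylAlg n K) (a b : Fin n → ℕ) : Prop :=
  ∀ a' b' : Fin n → ℕ, ∃ L ∈ Low n K (a + b + a' + b'),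
    D * wMono n K a' b' = wMono n K (a + a') (b + b') + L

theorem good_x {n : ℕ} {K : Type} [Field K] (i : Fin n) (D : WeylAlg n K) (a b : Fin n → ℕ)
    (h : GoodW D a b) : GoodW (wx n K i * D) (Pi.single i 1 + a) b := by
  intro a' b'
  obtain ⟨L, hL, e⟩ := h a' b'
  have h1 := wx_low i _ _ hL
  have e1 : Pi.single i 1 + a + b + a' + b' = a + b + a' + b' + Pi.single i 1 := by abel
  have e2 : Pi.single i 1 + a + a' = a + a' + Pi.single i 1 := by abel
  rw [e1, e2]
  exact ⟨_, h1, by rw [mul_assoc, e, mul_add, wx_wMono]⟩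

theorem good_d {n : ℕ} {K : Type} [Field K] (i : Fin n) (D : WeylAlg n K) (a b : Fin n → ℕ)
    (h : GoodW D a b) : GoodW (wd n K i * D) a (Pi.single i 1 + b) := by
  intro a' b'
  obtain ⟨L, hL, e⟩ := h a' b'
  have h1 := wd_low i _ _ hL
  have h2 : ((a + a') i : K) • wMono n K (a + a' - Pi.single i 1) (b + b') ∈
      Low n K (a + b + a' + b' + Pi.single i 1) := by
    apply Submodule.smul_mem
    apply low_mem
    · intro j
      simp only [Pi.add_apply, Pi.sub_apply]; omega
    · refine ⟨i, ?_⟩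
      simp only [Pi.add_apply, Pi.sub_apply, Pi.single_eq_same]; omega
  have h3 := Submodule.add_mem _ h2 h1
  have e1 : a + (Pi.single i 1 + b) + a' + b' = a + b + a' + b' + Pi.single i 1 := by abel
  have e2 : Pi.single i 1 + b + b' = b + b' + Pi.single i 1 := by abel
  rw [e1, e2]
  exact ⟨_, h3, by rw [mul_assoc, e, mul_add, wd_wMono, add_assoc]⟩

theorem good_xpow {n : ℕ} {K : Type} [Field K] (i : Fin n) (k : ℕ) (D : WeylAlg n K)
    (a b : Fin n → ℕ) (h : GoodW D a b) : GoodW (wx n K i ^ k * D) (Pi.single i k + a) b := by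
  induction k with
  | zero => simpa using h
  | succ k ih =>
    have := good_x i _ _ _ ih
    rw [← mul_assoc, ← pow_succ', ← add_assoc, ← Pi.single_add, add_comm 1 k] at this
    exact this

theorem good_dpow {n : ℕ} {K : Type} [Field K] (i : Fin n) (k : ℕ) (D : WeylAlg n K)
    (a b : Fin n → ℕ) (h : GoodW D a b) : GoodW (wd n K i ^ k * D) a (Pi.single i k + b) := by
  induction k with
  | zero => simpa using h
  | succ k ih =>
    have := good_d i _ _ _ ih
    rw [← mul_assoc, ← pow_succ', ← add_assoc, ← Pi.single_add, add_comm 1 k] at this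
    exact this

theorem good_LPx {n : ℕ} {K : Type} [Field K] (l : List (Fin n)) (c : Fin n → ℕ) (D : WeylAlg n K)
    (a b : Fin n → ℕ) (h : GoodW D a b) :
    GoodW (LP (wx n K) l c * D) ((l.map fun i => Pi.single i (c i)).sum + a) b := by
  induction l with
  | nil => simpa [LP] using h
  | cons i l ih =>
    have := good_xpow i (c i) _ _ _ ih
    rw [← mul_assoc, ← add_assoc] at this
    exact this

theorem good_LPd {n : ℕ} {K : Type} [Field K] (l : List (Fin n)) (c : Fin n → ℕ) (D : WeylAlg n K)
    (a b : Fin n → ℕ) (h : GoodW D a b) :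
    GoodW (LP (wd n K) l c * D) a ((l.map fun i => Pi.single i (c i)).sum + b) := by
  induction l with
  | nil => simpa [LP] using h
  | cons i l ih =>
    have := good_dpow i (c i) _ _ _ ih
    rw [← mul_assoc, ← add_assoc] at this
    exact this

theorem sum_single_fin {n : ℕ} (c : Fin n → ℕ) :
    ((List.finRange n).map fun i => (Pi.single i (c i) : Fin n → ℕ)).sum = c := by
  have h : ((List.finRange n).map fun i => (Pi.single i (c i) : Fin n → ℕ)).sum
      = ∑ i, (Pi.single i (c i) : Fin n → ℕ) := by
    rw [← List.ofFn_eq_map, List.sum_ofFn]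
  rw [h, Finset.univ_sum_single]

theorem good_wMono {n : ℕ} {K : Type} [Field K] (a b : Fin n → ℕ) : GoodW (wMono n K a b) a b := by
  have h1 : GoodW (1 : WeylAlg n K) 0 0 := by
    intro a' b'
    exact ⟨0, Submodule.zero_mem _, by simp⟩
  have h2 := good_LPx (List.finRange n) a _ _ _ (good_LPd (List.finRange n) b _ _ _ h1)
  rw [sum_single_fin, sum_single_fin, mul_one, add_zero, add_zero] at h2
  exact h2

theorem span_wMono {n : ℕ} {K : Type} [Field K] (D : WeylAlg n K) :
    D ∈ Submodule.span K (Set.range fun t : WExp n => wMono n K t.1 t.2) := by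
  set S := Submodule.span K (Set.range fun t : WExp n => wMono n K t.1 t.2) with hS
  have key : ∀ D (hD : D ∈ Algebra.adjoin K (weylGens n K)), ∀ E ∈ S,
      (⟨D, hD⟩ : WeylAlg n K) * E ∈ S := by
    intro D hD
    induction hD using Algebra.adjoin_induction with
    | mem x hx =>
      intro E hE
      rcases hx with ⟨i, rfl⟩ | ⟨i, rfl⟩
      · have : S ≤ S.comap (LinearMap.mulLeft K (wx n K i)) := by
          refine Submodule.span_le.mpr ?_
          rintro _ ⟨t, rfl⟩
          change wx n K i * wMono n K t.1 t.2 ∈ S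
          rw [wx_wMono]
          exact Submodule.subset_span ⟨(_, _), rfl⟩
        exact this hE
      · have : S ≤ S.comap (LinearMap.mulLeft K (wd n K i)) := by
          refine Submodule.span_le.mpr ?_
          rintro _ ⟨t, rfl⟩
          change wd n K i * wMono n K t.1 t.2 ∈ S
          rw [wd_wMono]
          exact S.add_mem (Submodule.subset_span ⟨(t.1, t.2 + Pi.single i 1), rfl⟩)
            (S.smul_mem _ (Submodule.subset_span ⟨(t.1 - Pi.single i 1, t.2), rfl⟩))
        exact this hE
    | algebraMap r =>
      intro E hE
      have : (⟨algebraMap K _ r, Subalgebra.algebraMap_mem _ r⟩ : WeylAlg n K) * E = r • E := by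
        rw [Algebra.smul_def]; rfl
      exact this ▸ S.smul_mem r hE
    | add x y hx hy ihx ihy =>
      intro E hE
      have := S.add_mem (ihx E hE) (ihy E hE)
      rw [← add_mul] at this
      exact this
    | mul x y hx hy ihx ihy =>
      intro E hE
      have := ihx _ (ihy E hE)
      rw [← mul_assoc] at this
      exact this
  have h1 : (1 : WeylAlg n K) ∈ S := Submodule.subset_span ⟨(0, 0), by simp [wMono]⟩
  have := key D.1 D.2 1 h1
  rwa [mul_one] at this

theorem represents_iff {n m : ℕ} {K : Type} [Field K] (c : WTerm n m →₀ K)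
    (f : Fin m → WeylAlg n K) :
    Represents c f ↔ Finsupp.linearCombination K (termVal K) c = f := by
  unfold Represents
  rw [Finsupp.linearCombination_apply]
  exact eq_comm

theorem exists_rep {n m : ℕ} {K : Type} [Field K] (f : Fin m → WeylAlg n K) :
    ∃ c : WTerm n m →₀ K, Represents c f := by
  simp only [represents_iff]
  have : f ∈ Submodule.span K (Set.range (termVal (n := n) (m := m) K)) := by
    rw [← Finset.univ_sum_single f]
    apply Submodule.sum_mem
    intro i _
    have h : Submodule.span K (Set.range fun t : WExp n => wMono n K t.1 t.2) ≤
        (Submodule.span K (Set.range (termVal (n := n) (m := m) K))).comap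
          (LinearMap.single K (fun _ : Fin m => WeylAlg n K) i) := by
      refine Submodule.span_le.mpr ?_
      rintro _ ⟨t, rfl⟩
      exact Submodule.subset_span ⟨(t, i), rfl⟩
    exact h (span_wMono (f i))
  exact (Finsupp.mem_span_range_iff_exists_finsupp.mp this).imp
    fun c hc => by rw [Finsupp.linearCombination_apply]; exact hc

/-! ### Orders -/

def keyFun1 {n p : ℕ} (B : Fin n → Fin p) (j : Fin p) : List (WExp n → ℕ) :=
  [fun t => ordBlk B t.1 t.2 j] ++
    (((List.finRange p).filter fun k => k ≠ j).map fun k => fun t => ordBlk B t.1 t.2 k)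

def keyFun2 {n p : ℕ} (B : Fin n → Fin p) (j : Fin p) : List (WExp n → ℕ) :=
  (((List.finRange n).filter fun i => B i = j).map fun i => fun t => t.1 i) ++
  (((List.finRange n).filter fun i => B i = j).map fun i => fun t => t.2 i) ++
  ((((List.finRange n).filter fun i => B i ≠ j).map fun i =>
    [fun t : WExp n => t.1 i, fun t => t.2 i]).flatten)

theorem keyList_eq {n p : ℕ} (B : Fin n → Fin p) (j : Fin p) (t : WExp n) :
    keyList B j t = (keyFun1 B j ++ keyFun2 B j).map fun φ => φ t := by
  simp only [keyList, keyFun1, keyFun2, List.map_append, List.map_map, List.map_flatten,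
    List.map_cons, List.map_nil, List.append_assoc]
  rfl

theorem ordBlk_add {n p : ℕ} (B : Fin n → Fin p) (s t : WExp n) (j : Fin p) :
    ordBlk B (s + t).1 (s + t).2 j = ordBlk B s.1 s.2 j + ordBlk B t.1 t.2 j := by
  unfold ordBlk
  rw [← Finset.sum_add_distrib]
  apply Finset.sum_congr rfl
  intro i _
  simp only [Prod.fst_add, Prod.snd_add, Pi.add_apply]
  omega

theorem keyFun_add {n p : ℕ} (B : Fin n → Fin p) (j : Fin p) :
    ∀ φ ∈ keyFun1 B j ++ keyFun2 B j, ∀ s t, φ (s + t) = φ s + φ t := by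
  intro φ hφ s t
  simp only [keyFun1, keyFun2, List.mem_append, List.mem_map, List.mem_flatten,
    List.mem_singleton] at hφ
  rcases hφ with (rfl | ⟨k, _, rfl⟩) | (⟨k, _, rfl⟩ | ⟨k, _, rfl⟩) | ⟨_, ⟨k, _, rfl⟩, h⟩
  · exact ordBlk_add B s t j
  · exact ordBlk_add B s t k
  · rfl
  · rfl
  · rcases List.mem_cons.mp h with rfl | h
    · rfl
    · rw [List.mem_singleton.mp h]; rfl

theorem keyList_inj {n p : ℕ} (B : Fin n → Fin p) (j : Fin p) :
    Function.Injective (keyList B j) := by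
  intro s t h
  rw [keyList_eq, keyList_eq, List.map_inj_left] at h
  have h1 : ∀ i, s.1 i = t.1 i := by
    intro i
    apply h (fun t => t.1 i)
    apply List.mem_append_right
    unfold keyFun2
    by_cases hi : B i = j
    · apply List.mem_append_left; apply List.mem_append_left
      exact List.mem_map.mpr ⟨i, by simp [hi], rfl⟩
    · apply List.mem_append_right
      exact List.mem_flatten.mpr ⟨_, List.mem_map.mpr ⟨i, by simp [hi], rfl⟩, by simp⟩
  have h2 : ∀ i, s.2 i = t.2 i := by
    intro i
    apply h (fun t => t.2 i)
    apply List.mem_append_right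
    unfold keyFun2
    by_cases hi : B i = j
    · apply List.mem_append_left; apply List.mem_append_right
      exact List.mem_map.mpr ⟨i, by simp [hi], rfl⟩
    · apply List.mem_append_right
      exact List.mem_flatten.mpr ⟨_, List.mem_map.mpr ⟨i, by simp [hi], rfl⟩, by simp⟩
  exact Prod.ext (funext h1) (funext h2)

theorem lex_add {n : ℕ} (L : List (WExp n → ℕ)) (hL : ∀ φ ∈ L, ∀ s t, φ (s + t) = φ s + φ t)
    (q s t : WExp n) (h : List.Lex (· < ·) (L.map fun φ => φ s) (L.map fun φ => φ t)) :
    List.Lex (· < ·) (L.map fun φ => φ (q + s)) (L.map fun φ => φ (q + t)) := by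
  induction L with
  | nil => simp at h
  | cons φ L ih =>
    simp only [List.map_cons] at h ⊢
    have e := hL φ (by simp)
    rw [e, e]
    generalize hx : φ s = x at h ⊢
    generalize hy : φ t = y at h ⊢
    generalize hl1 : L.map (fun φ => φ s) = l1 at h
    generalize hl2 : L.map (fun φ => φ t) = l2 at h
    cases h with
    | rel h => exact List.Lex.rel (by omega)
    | cons h =>
      subst hl1 hl2
      exact List.Lex.cons (ih (fun ψ hψ => hL ψ (by simp [hψ])) h)

theorem lex_head_le {x y : ℕ} {l1 l2 : List ℕ} (h : List.Lex (· < ·) (x :: l1) (y :: l2)) :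
    x ≤ y := by
  cases h with
  | rel h => exact h.le
  | cons h => exact le_rfl

theorem lex_of_initial {n : ℕ} (L1 L2 : List (WExp n → ℕ)) (s t : WExp n)
    (h : ∀ φ ∈ L1, φ s ≤ φ t) (h' : ∃ φ ∈ L1, φ s < φ t) :
    List.Lex (· < ·) ((L1 ++ L2).map fun φ => φ s) ((L1 ++ L2).map fun φ => φ t) := by
  induction L1 with
  | nil => simp at h'
  | cons φ L ih =>
    simp only [List.map_cons, List.cons_append]
    rcases (h φ (by simp)).lt_or_eq with hlt | heq
    · exact List.Lex.rel hlt
    · rw [heq]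
      apply List.Lex.cons
      apply ih
      · intro ψ hψ; exact h ψ (by simp [hψ])
      · obtain ⟨ψ, hψ, hl⟩ := h'
        rcases List.mem_cons.mp hψ with rfl | hm
        · omega
        · exact ⟨ψ, hm, hl⟩

def tkey {n p m : ℕ} (B : Fin n → Fin p) (j : Fin p) (t : WTerm n m) : List ℕ ×ₗ Fin m :=
  toLex (keyList B j t.1, t.2)

theorem tkey_inj {n p m : ℕ} (B : Fin n → Fin p) (j : Fin p) :
    Function.Injective (tkey (m := m) B j) := by
  intro s t h
  have h' : (keyList B j s.1, s.2) = (keyList B j t.1, t.2) := toLex.injective h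
  have h2 := Prod.ext_iff.mp h'
  exact Prod.ext (keyList_inj B j h2.1) h2.2

theorem termLt_iff {n p m : ℕ} (B : Fin n → Fin p) (j : Fin p) (s t : WTerm n m) :
    termLt B j s t ↔ tkey B j s < tkey B j t := by
  unfold tkey
  rw [Prod.Lex.toLex_lt_toLex]
  unfold termLt
  simp only [(keyList_inj B j).eq_iff]
  rfl

theorem wf_key {n p m : ℕ} (B : Fin n → Fin p) (j : Fin p) :
    WellFounded (fun s t : WTerm n m => tkey B j s < tkey B j t) := by
  have h1 : WellFounded (Prod.Lex (List.Shortlex ((· < ·) : ℕ → ℕ → Prop))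
      ((· < ·) : Fin m → Fin m → Prop)) :=
    WellFounded.prod_lex (List.Shortlex.wf wellFounded_lt) wellFounded_lt
  refine Subrelation.wf ?_ (InvImage.wf (fun t : WTerm n m => (keyList B j t.1, t.2)) h1)
  intro s t h
  rw [← termLt_iff] at h
  change Prod.Lex _ _ (keyList B j s.1, s.2) (keyList B j t.1, t.2)
  rw [Prod.lex_def]
  rcases h with h | ⟨h, h'⟩
  · left
    rw [List.shortlex_def]
    right
    refine ⟨?_, h⟩
    simp only [keyList_eq, List.length_map]
  · right
    exact ⟨congrArg (keyList B j) h, h'⟩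

def tadd {n m : ℕ} (q : WExp n) (t : WTerm n m) : WTerm n m := (q + t.1, t.2)

theorem tkey_add {n p m : ℕ} (B : Fin n → Fin p) (j : Fin p) (q : WExp n) (s t : WTerm n m)
    (h : tkey B j s < tkey B j t) : tkey B j (tadd q s) < tkey B j (tadd q t) := by
  rw [← termLt_iff] at h ⊢
  rcases h with h | ⟨h, h'⟩
  · left
    unfold monLt at h ⊢
    rw [keyList_eq, keyList_eq] at h ⊢
    exact lex_add _ (keyFun_add B j) q _ _ h
  · right
    exact ⟨by simp [tadd, h], h'⟩

theorem ordBlk_mono {n p : ℕ} (B : Fin n → Fin p) (s t : WExp n)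
    (h : ∀ i, s.1 i + s.2 i ≤ t.1 i + t.2 i) (j : Fin p) :
    ordBlk B s.1 s.2 j ≤ ordBlk B t.1 t.2 j :=
  Finset.sum_le_sum fun i _ => h i

theorem tkey_low {n p m : ℕ} (B : Fin n → Fin p) (j : Fin p) (s t : WTerm n m)
    (h : ∀ i, s.1.1 i + s.1.2 i ≤ t.1.1 i + t.1.2 i)
    (h' : ∃ i, s.1.1 i + s.1.2 i < t.1.1 i + t.1.2 i) :
    tkey B j s < tkey B j t := by
  rw [← termLt_iff]
  left
  unfold monLt
  rw [keyList_eq, keyList_eq]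
  apply lex_of_initial
  · intro φ hφ
    simp only [keyFun1, List.mem_append, List.mem_map, List.mem_singleton] at hφ
    rcases hφ with rfl | ⟨k, _, rfl⟩
    · exact ordBlk_mono B _ _ h j
    · exact ordBlk_mono B _ _ h k
  · obtain ⟨i, hi⟩ := h'
    refine ⟨fun t => ordBlk B t.1 t.2 (B i), ?_, ?_⟩
    · unfold keyFun1
      by_cases hj : B i = j
      · rw [hj]; simp
      · apply List.mem_append_right
        exact List.mem_map.mpr ⟨B i, by simp [hj], rfl⟩
    · exact Finset.sum_lt_sum (fun i _ => h i) ⟨i, by simp, hi⟩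

theorem ord_le_of_tkey_le {n p m : ℕ} (B : Fin n → Fin p) (j : Fin p) (s t : WTerm n m)
    (h : tkey B j s ≤ tkey B j t) : ordT B j s ≤ ordT B j t := by
  rcases h.lt_or_eq with h | h
  · rw [← termLt_iff] at h
    rcases h with h | ⟨h, _⟩
    · unfold monLt keyList at h
      simp only [List.cons_append, List.nil_append] at h
      exact lex_head_le h
    · simp [ordT, h]
  · rw [tkey_inj B j h]

theorem leader_le {n p m : ℕ} {K : Type} [Field K] (B : Fin n → Fin p) (j : Fin p)
    (c : WTerm n m →₀ K) (u : WTerm n m) (h : IsLeader B j c u) (t) (ht : t ∈ c.support) :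
    tkey B j t ≤ tkey B j u := by
  by_cases e : t = u
  · rw [e]
  · exact ((termLt_iff B j _ _).mp (h.2 t ht e)).le

theorem exists_leader {n p m : ℕ} {K : Type} [Field K] (B : Fin n → Fin p) (j : Fin p)
    (c : WTerm n m →₀ K) (h : c.support.Nonempty) : ∃ u, IsLeader B j c u := by
  obtain ⟨u, hu, hmax⟩ := Finset.exists_max_image c.support (tkey B j) h
  refine ⟨u, hu, fun t ht hne => ?_⟩
  rw [termLt_iff]
  exact lt_of_le_of_ne (hmax t ht) fun e => hne (tkey_inj B j e)

/-- maximal `j`-order -/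
noncomputable def maxOrd {n p m : ℕ} {K : Type} [Field K] (B : Fin n → Fin p) (j : Fin p)
    (c : WTerm n m →₀ K) : ℕ := c.support.sup (ordT B j)

theorem leader_ord {n p m : ℕ} {K : Type} [Field K] (B : Fin n → Fin p) (j : Fin p)
    (c : WTerm n m →₀ K) (u : WTerm n m) (h : IsLeader B j c u) : ordT B j u = maxOrd B j c := by
  apply le_antisymm
  · exact Finset.le_sup (f := ordT B j) h.1
  · exact Finset.sup_le fun t ht => ord_le_of_tkey_le B j _ _ (leader_le B j c u h t ht)

def Bad {n p m : ℕ} {K : Type} [Field K] (B : Fin n → Fin p) (k : Fin p) (is : List (Fin p))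
    (c : WTerm n m →₀ K) (ug : Fin p → WTerm n m) (w : WTerm n m) : Prop :=
  w ∈ c.support ∧ tdvd (ug k) w ∧ ∀ i ∈ is,
    ordBlk B (tquot w (ug k)).1 (tquot w (ug k)).2 i + ordT B i (ug i) ≤ maxOrd B i c

theorem reduced_of_not_bad {n p m : ℕ} {K : Type} [Field K] (B : Fin n → Fin p) (k : Fin p)
    (is : List (Fin p)) (c : WTerm n m →₀ K) (ug : Fin p → WTerm n m)
    (h : ∀ w, ¬ Bad B k is c ug w) : ReducedWrt B k is c ug := by
  intro w hw hd
  by_contra hcon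
  push Not at hcon
  refine h w ⟨hw, hd, fun i hi => ?_⟩
  obtain ⟨u, hu⟩ := exists_leader B i c ⟨w, hw⟩
  rw [← leader_ord B i c u hu]
  exact hcon i hi u hu

/-- Product of a monomial with an element: leading term plus lower terms. -/
theorem mul_expand {n p m : ℕ} {K : Type} [Field K] (B : Fin n → Fin p) (k : Fin p)
    (g : Fin m → WeylAlg n K) (cg : WTerm n m →₀ K) (ug : Fin p → WTerm n m)
    (hrep : Represents cg g) (hlead : ∀ j, IsLeader B j cg (ug j)) (q : WExp n) :
    ∃ c' : WTerm n m →₀ K,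
      (∀ s ∈ c'.support, tkey B k s < tkey B k (tadd q (ug k)) ∧
        ∀ j, ordT B j s ≤ ordBlk B q.1 q.2 j + ordT B j (ug j)) ∧
      wMono n K q.1 q.2 • g = cg (ug k) • termVal K (tadd q (ug k)) +
        Finsupp.linearCombination K (termVal K) c' := by
  set S : Set (WTerm n m) := {s | tkey B k s < tkey B k (tadd q (ug k)) ∧
        ∀ j, ordT B j s ≤ ordBlk B q.1 q.2 j + ordT B j (ug j)} with hS
  have hterm : ∀ t : WTerm n m, tkey B k t ≤ tkey B k (ug k) →
      (∀ j, ordT B j t ≤ ordT B j (ug j)) →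
      ∃ z ∈ Submodule.span K (termVal K '' S),
        wMono n K q.1 q.2 • termVal K t = termVal K (tadd q t) + z := by
    intro t ht hto
    obtain ⟨L, h1, e⟩ := good_wMono (K := K) q.1 q.2 t.1.1 t.1.2
    have h2 : Low n K (q.1 + q.2 + t.1.1 + t.1.2) ≤ (Submodule.span K (termVal K '' S)).comap
        (LinearMap.single K (fun _ : Fin m => WeylAlg n K) t.2) := by
      refine Submodule.span_le.mpr ?_
      rintro _ ⟨s, ⟨hs1, hs2⟩, rfl⟩
      refine Submodule.subset_span ⟨(s, t.2), ⟨?_, ?_⟩, rfl⟩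
      · have : tkey B k ((s, t.2) : WTerm n m) < tkey B k (tadd q t) := by
          apply tkey_low
          · intro i
            have := hs1 i
            simp only [tadd, Prod.fst_add, Prod.snd_add, Pi.add_apply] at this ⊢
            omega
          · obtain ⟨i, hi⟩ := hs2
            refine ⟨i, ?_⟩
            simp only [tadd, Prod.fst_add, Prod.snd_add, Pi.add_apply] at hi ⊢
            omega
        refine lt_of_lt_of_le this ?_
        rcases ht.lt_or_eq with h | h
        · exact (tkey_add B k q _ _ h).le
        · rw [tkey_inj B k h]
      · intro j
        have h3 : ordBlk B s.1 s.2 j ≤ ordBlk B (q + t.1).1 (q + t.1).2 j := by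
          apply ordBlk_mono
          intro i
          have := hs1 i
          simp only [Prod.fst_add, Prod.snd_add, Pi.add_apply] at this ⊢
          omega
        rw [ordBlk_add] at h3
        have := hto j
        unfold ordT at this ⊢
        exact h3.trans (by omega)
    have h3 := h2 h1
    refine ⟨_, h3, ?_⟩
    unfold termVal
    rw [← Pi.single_smul, smul_eq_mul, e, Pi.single_add]
    rfl
  have hmem : ∃ z ∈ Submodule.span K (termVal K '' S),
      wMono n K q.1 q.2 • g = cg (ug k) • termVal K (tadd q (ug k)) + z := by
    have hle : ∀ t ∈ cg.support, tkey B k t ≤ tkey B k (ug k) ∧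
        ∀ j, ordT B j t ≤ ordT B j (ug j) := fun t ht =>
      ⟨leader_le B k cg _ (hlead k) t ht,
        fun j => ord_le_of_tkey_le B j _ _ (leader_le B j cg _ (hlead j) t ht)⟩
    have hu := (hlead k).1
    have e1 : wMono n K q.1 q.2 • g =
        ∑ t ∈ cg.support, cg t • (wMono n K q.1 q.2 • termVal K t) := by
      conv_lhs => rw [hrep]
      rw [Finsupp.sum, Finset.smul_sum]
      exact Finset.sum_congr rfl fun t _ => smul_comm _ _ _
    obtain ⟨z, hz, ez⟩ := hterm _ (hle _ hu).1 (hle _ hu).2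
    rw [e1, ← Finset.add_sum_erase _ _ hu, ez, smul_add, add_assoc]
    refine ⟨_, Submodule.add_mem _ (Submodule.smul_mem _ _ hz) ?_, rfl⟩
    · apply Submodule.sum_mem
      intro t ht
      have ht' := Finset.mem_erase.mp ht
      apply Submodule.smul_mem
      obtain ⟨z1, h1, ez1⟩ := hterm t (hle _ ht'.2).1 (hle _ ht'.2).2
      have h2 : termVal K (tadd q t) ∈ Submodule.span K (termVal K '' S) := by
        refine Submodule.subset_span ⟨_, ⟨?_, ?_⟩, rfl⟩
        · exact tkey_add B k q _ _ ((termLt_iff _ _ _ _).mp ((hlead k).2 t ht'.2 ht'.1))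
        · intro j
          have := (hle _ ht'.2).2 j
          have h3 := ordBlk_add B q t.1 j
          unfold ordT at this ⊢
          change ordBlk B (q + t.1).1 (q + t.1).2 j ≤ _
          omega
      rw [ez1]
      exact Submodule.add_mem _ h2 h1
  obtain ⟨z, hz, ez⟩ := hmem
  rw [Finsupp.mem_span_image_iff_linearCombination] at hz
  obtain ⟨c', hc', he⟩ := hz
  refine ⟨c', fun s hs => ?_, ?_⟩
  · exact (Finsupp.mem_supported K c').mp hc' hs
  · rw [he, ez]

theorem main_aux {n p m r : ℕ} {K : Type} [Field K] (B : Fin n → Fin p) (k : Fin p)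
    (is : List (Fin p)) (g : Fin r → Fin m → WeylAlg n K)
    (cg : Fin r → (WTerm n m →₀ K)) (ug : Fin r → Fin p → WTerm n m)
    (hrep : ∀ i, Represents (cg i) (g i))
    (hlead : ∀ i j, IsLeader B j (cg i) (ug i j)) (w : WTerm n m) :
    ∀ (f : Fin m → WeylAlg n K) (c : WTerm n m →₀ K), Represents c f →
      (∀ i t, Bad B k is c (ug i) t → tkey B k t ≤ tkey B k w) →
      ∃ h : Fin m → WeylAlg n K, (∃ z ∈ Submodule.span (WeylAlg n K) (Set.range g), f = h + z) ∧
        ∃ ch : WTerm n m →₀ K, Represents ch h ∧ ∀ i, ReducedWrt B k is ch (ug i) := by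
  induction w using (wf_key (m := m) B k).induction with
  | _ w ih =>
  intro f c hc hbad
  classical
  by_cases hex : ∃ i t, Bad B k is c (ug i) t
  swap
  · push Not at hex
    exact ⟨f, ⟨0, Submodule.zero_mem _, (add_zero f).symm⟩, c, hc, fun i => reduced_of_not_bad _ _ _ _ _ (hex i)⟩
  obtain ⟨v, ⟨i, hv⟩, hmax⟩ : ∃ v, (∃ i, Bad B k is c (ug i) v) ∧
      ∀ i t, Bad B k is c (ug i) t → tkey B k t ≤ tkey B k v := by
    obtain ⟨i, t, ht⟩ := hex
    obtain ⟨v, hv, hmax⟩ := Finset.exists_max_image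
      (c.support.filter fun t => ∃ i, Bad B k is c (ug i) t) (tkey B k)
      ⟨t, Finset.mem_filter.mpr ⟨ht.1, i, ht⟩⟩
    exact ⟨v, (Finset.mem_filter.mp hv).2,
      fun i t ht => hmax t (Finset.mem_filter.mpr ⟨ht.1, i, ht⟩)⟩
  obtain ⟨hvs, hdvd, hord⟩ := hv
  set q := tquot v (ug i k) with hq
  have hqv : tadd q (ug i k) = v := by
    obtain ⟨h1, h2, h3⟩ := hdvd
    refine Prod.ext (Prod.ext ?_ ?_) h1
    · exact tsub_add_cancel_of_le h2
    · exact tsub_add_cancel_of_le h3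
  obtain ⟨c', hc', he⟩ := mul_expand B k (g i) (cg i) (ug i) (hrep i) (hlead i) q
  rw [hqv] at hc' he
  have hne : cg i (ug i k) ≠ 0 := Finsupp.mem_support_iff.mp (hlead i k).1
  set a := c v * (cg i (ug i k))⁻¹ with ha
  set c2 : WTerm n m →₀ K := c + (Finsupp.single v (-c v) + (-a) • c') with hc2
  set f2 := f + (-a) • (wMono n K q.1 q.2 • g i) with hf2
  have hrep2 : Represents c2 f2 := by
    rw [represents_iff] at hc ⊢
    rw [hc2, hf2, map_add, map_add, map_smul, hc, he, Finsupp.linearCombination_single, smul_add,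
      smul_smul, ha, neg_mul, inv_mul_cancel_right₀ hne]
  have hspan : ∃ z ∈ Submodule.span (WeylAlg n K) (Set.range g), f = f2 + z := by
    refine ⟨(a • wMono n K q.1 q.2) • g i,
      Submodule.smul_mem _ _ (Submodule.subset_span ⟨i, rfl⟩), ?_⟩
    rw [hf2, smul_assoc, add_assoc, ← add_smul, neg_add_cancel, zero_smul, add_zero]
  have hc'v : c' v = 0 := by
    by_contra h
    exact lt_irrefl _ (hc' v (Finsupp.mem_support_iff.mpr h)).1
  have hsupp : ∀ t, t ∈ c2.support → t ≠ v ∧ (t ∈ c.support ∨ t ∈ c'.support) := by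
    intro t ht
    rw [Finsupp.mem_support_iff] at ht
    constructor
    · rintro rfl
      apply ht
      simp [hc2, hc'v]
    · by_contra hcon
      push Not at hcon
      simp only [Finsupp.notMem_support_iff] at hcon
      by_cases e : v = t
      · subst e
        apply ht
        simp [hc2, hc'v]
      · apply ht
        simp [hc2, hcon.1, hcon.2, e]
  have hmaxord : ∀ j ∈ is, maxOrd B j c2 ≤ maxOrd B j c := by
    intro j hj
    refine Finset.sup_le fun t ht => ?_
    rcases (hsupp t ht).2 with h | h
    · exact Finset.le_sup (f := ordT B j) h
    · exact ((hc' t h).2 j).trans (hord j hj)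
  have hbad2 : ∀ i t, Bad B k is c2 (ug i) t → tkey B k t < tkey B k v := by
    intro i' t ht
    obtain ⟨h1, h2⟩ := hsupp t ht.1
    rcases h2 with h2 | h2
    · have : Bad B k is c (ug i') t :=
        ⟨h2, ht.2.1, fun j hj => (ht.2.2 j hj).trans (hmaxord j hj)⟩
      exact lt_of_le_of_ne (hmax i' t this) fun e => h1 (tkey_inj B k e)
    · exact (hc' t h2).1
  by_cases hex2 : ∃ i t, Bad B k is c2 (ug i) t
  swap
  · push Not at hex2
    exact ⟨f2, hspan, c2, hrep2, fun i => reduced_of_not_bad _ _ _ _ _ (hex2 i)⟩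
  obtain ⟨v2, ⟨i2, hv2⟩, hmax2⟩ : ∃ v, (∃ i, Bad B k is c2 (ug i) v) ∧
      ∀ i t, Bad B k is c2 (ug i) t → tkey B k t ≤ tkey B k v := by
    obtain ⟨i, t, ht⟩ := hex2
    obtain ⟨v, hv, hmax⟩ := Finset.exists_max_image
      (c2.support.filter fun t => ∃ i, Bad B k is c2 (ug i) t) (tkey B k)
      ⟨t, Finset.mem_filter.mpr ⟨ht.1, i, ht⟩⟩
    exact ⟨v, (Finset.mem_filter.mp hv).2,
      fun i t ht => hmax t (Finset.mem_filter.mpr ⟨ht.1, i, ht⟩)⟩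
  obtain ⟨h, hh, rest⟩ := ih v2
    (lt_of_lt_of_le (hbad2 i2 v2 hv2) (hbad i v ⟨hvs, hdvd, hord⟩)) f2 c2 hrep2 hmax2
  refine ⟨h, ?_, rest⟩
  obtain ⟨z1, hz1, e1⟩ := hspan
  obtain ⟨z2, hz2, e2⟩ := hh
  exact ⟨z2 + z1, Submodule.add_mem _ hz2 hz1, by rw [e1, e2, add_assoc]⟩

theorem sub_aux {n m : ℕ} {K : Type} [Field K] (f h z : Fin m → WeylAlg n K) (e : f = h + z) :
    f - h = z := by
  subst e
  funext j
  apply Subtype.ext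
  change (h j : Module.End K (MvPolynomial (Fin n) K)) + z j - h j = z j
  abel

end main

theorem statement_15 (n p m r : ℕ) (hp : 0 < p) (K : Type) [Field K] [CharZero K]
    (nn : Fin p → ℕ) (hn : ∑ j, nn j = n)
    (B : Fin n → Fin p) (hBmono : Monotone B)
    (hBcard : ∀ j, (Finset.univ.filter fun i => B i = j).card = nn j)
    (g : Fin r → Fin m → WeylAlg n K) (hg0 : ∀ i, g i ≠ 0)
    (cg : Fin r → (WTerm n m →₀ K)) (ug : Fin r → Fin p → WTerm n m)
    (hrep : ∀ i, Represents (cg i) (g i))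
    (hlead : ∀ i j, IsLeader B j (cg i) (ug i j))
    (f : Fin m → WeylAlg n K) :
    ∃ (h : Fin m → WeylAlg n K) (Q : Fin r → WeylAlg n K),
      (f - h = ∑ i, fun j => Q i * g i j) ∧
      ∃ ch : WTerm n m →₀ K, Represents ch h ∧
        ∀ i, ReducedWrt B ⟨0, hp⟩ ((List.finRange p).tail) ch (ug i) := by
  obtain ⟨c, hc⟩ := exists_rep f
  have key : ∃ h : Fin m → WeylAlg n K, (∃ z ∈ Submodule.span (WeylAlg n K) (Set.range g), f = h + z) ∧
        ∃ ch : WTerm n m →₀ K, Represents ch h ∧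
          ∀ i, ReducedWrt B ⟨0, hp⟩ ((List.finRange p).tail) ch (ug i) := by
    by_cases hne : c.support.Nonempty
    · obtain ⟨w, hw⟩ := exists_leader B ⟨0, hp⟩ c hne
      exact main_aux B ⟨0, hp⟩ _ g cg ug hrep hlead w f c hc
        fun i t ht => leader_le B _ c w hw t ht.1
    · refine ⟨f, ⟨0, Submodule.zero_mem _, (add_zero f).symm⟩, c, hc, fun i t ht => ?_⟩
      exact absurd ⟨t, ht⟩ hne
  obtain ⟨h, ⟨z, hh, ez⟩, rest⟩ := key
  rw [Submodule.mem_span_range_iff_exists_fun] at hh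
  obtain ⟨Q, hQ⟩ := hh
  exact ⟨h, Q, (sub_aux f h z ez).trans hQ.symm, rest⟩
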